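/- Let A be a nonzero real m×n matrix, b ∈ ℝ^m, and let W be a real symmetric n×n matrix all of whose eigenvalues lie in [0,1], with ker(A) ∩ fix(W) = {0}. Fix γ with 0 < γ < 1/λ_max(AᵀA) and a real sequence {α_k}_{k≥1} with α_k → 1. Then the matrix I_n − W(I_n − γAᵀA) is invertible, and for every initialization x₀ ∈ ℝ^n, the α-PnP-FISTA iterates defined by y₁ = x₀ and, for k ≥ 1, x_k = W(y_k − γAᵀ(A y_k − b)) and y_{k+1} = x_k + α_k(x_k − x_{k−1}), converge linearly to x* := (I_n − W(I_n − γAᵀA))^{−1}(γ W Aᵀ b): there exist C > 0, β ∈ [0,1), and K ≥ 1 such that ‖x_k − x*‖₂ ≤ C·β^k for all k ≥ K. -/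

import Mathlib

open Filter Matrix

/-- The Euclidean (ℓ²) norm on `Fin n → ℝ`. -/
noncomputable def norm2 {n : ℕ} (x : Fin n → ℝ) : ℝ := Real.sqrt (∑ i, x i ^ 2)

/-- The largest eigenvalue of a real (symmetric) matrix, as the supremum of its real
spectrum. -/
noncomputable def lamMax {n : ℕ} (S : Matrix (Fin n) (Fin n) ℝ) : ℝ := sSup (spectrum ℝ S)

def LinD (z : ℕ → ℝ) : Prop :=
  ∃ C, 0 < C ∧ ∃ β, 0 ≤ β ∧ β < 1 ∧ ∃ K, 1 ≤ K ∧ ∀ k : ℕ, K ≤ k → |z k| ≤ C * β ^ k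

lemma LinD.add {z w : ℕ → ℝ} (hz : LinD z) (hw : LinD w) : LinD (fun k => z k + w k) := by
  obtain ⟨C, hC, β, hβ, hβ1, K, hK, h⟩ := hz
  obtain ⟨C', hC', β', hβ', hβ1', K', hK', h'⟩ := hw
  refine ⟨C + C', by positivity, max β β', le_max_of_le_left hβ, max_lt hβ1 hβ1', max K K',
    le_max_of_le_left hK, fun k hk => ?_⟩
  have h1 := h k (le_trans (le_max_left _ _) hk)
  have h2 := h' k (le_trans (le_max_right _ _) hk)
  have h3 : β ^ k ≤ (max β β') ^ k := pow_le_pow_left₀ hβ (le_max_left _ _) k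
  have h4 : β' ^ k ≤ (max β β') ^ k := pow_le_pow_left₀ hβ' (le_max_right _ _) k
  have h5 := abs_add_le (z k) (w k)
  have h6 := mul_le_mul_of_nonneg_left h3 hC.le
  have h7 := mul_le_mul_of_nonneg_left h4 hC'.le
  simp only
  linarith

lemma LinD.zero : LinD (fun _ => 0) :=
  ⟨1, one_pos, 0, le_rfl, one_pos, 1, le_rfl, fun k _ => by simp⟩

lemma LinD.smul {z : ℕ → ℝ} (c : ℝ) (hz : LinD z) : LinD (fun k => c * z k) := by
  obtain ⟨C, hC, β, hβ, hβ1, K, hK, h⟩ := hz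
  refine ⟨(|c| + 1) * C, by positivity, β, hβ, hβ1, K, hK, fun k hk => ?_⟩
  have h1 := h k hk
  rw [abs_mul]
  have h2 := mul_le_mul_of_nonneg_left h1 (abs_nonneg c)
  have h3 : 0 ≤ C * β ^ k := by positivity
  linarith

lemma LinD.sum {ι : Type*} (s : Finset ι) (z : ι → ℕ → ℝ) (h : ∀ i, LinD (z i)) :
    LinD (fun k => ∑ i ∈ s, z i k) := by
  classical
  induction s using Finset.induction_on with
  | empty => simpa using LinD.zero
  | insert a s ha ih =>
    simp only [Finset.sum_insert ha]
    exact (h a).add ih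

lemma LinD.abs {z : ℕ → ℝ} (hz : LinD z) : LinD (fun k => |z k|) := by
  simpa [LinD] using hz

lemma LinD.of_rec (l : ℝ) (hl : 0 ≤ l) (hl1 : l < 1) (α : ℕ → ℝ)
    (hα : Tendsto α atTop (nhds 1)) (z : ℕ → ℝ)
    (hz : ∀ k, 1 ≤ k → z (k + 1) = l * (z k + α k * (z k - z (k - 1)))) : LinD z := by
  have h1 : Tendsto (fun k => α k ^ 2 - 1) atTop (nhds 0) := by
    simpa using (hα.pow 2).sub_const 1
  have h2 : ∀ᶠ k in atTop, α k ^ 2 - 1 < (1 - l) / 2 :=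
    h1.eventually (gt_mem_nhds (by linarith))
  obtain ⟨K, hK⟩ := eventually_atTop.1 h2
  set V : ℕ → ℝ := fun k => (1 - l) * z k ^ 2 + l * (z k - z (k - 1)) ^ 2 with hV
  set ρ : ℝ := (1 + l) / 2 with hρ
  have hρ0 : 0 < ρ := by rw [hρ]; linarith
  have hV0 : ∀ k, 0 ≤ V k := fun k => by
    have : 0 ≤ 1 - l := by linarith
    simp only [hV]; positivity
  have hstep : ∀ k, max K 1 ≤ k → V (k + 1) ≤ ρ * V k := by
    intro k hk
    have hk1 : 1 ≤ k := le_trans (le_max_right _ _) hk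
    have hkK := hK k (le_trans (le_max_left _ _) hk)
    have e : V (k + 1) = l * V k + l ^ 2 * ((α k ^ 2 - 1) * (z k - z (k - 1)) ^ 2) := by
      simp only [hV, Nat.add_sub_cancel, hz k hk1]
      ring
    rw [e, hρ]
    have i1 : l ^ 2 * ((α k ^ 2 - 1) * (z k - z (k - 1)) ^ 2)
        ≤ l ^ 2 * ((1 - l) / 2 * (z k - z (k - 1)) ^ 2) := by gcongr
    have i2 : l ^ 2 * ((1 - l) / 2 * (z k - z (k - 1)) ^ 2)
        ≤ l * ((1 - l) / 2 * (z k - z (k - 1)) ^ 2) := by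
      have : 0 ≤ (1 - l) / 2 * (z k - z (k - 1)) ^ 2 := by
        have : 0 ≤ 1 - l := by linarith
        positivity
      gcongr
      nlinarith
    have i3 : l * ((1 - l) / 2 * (z k - z (k - 1)) ^ 2) ≤ (1 - l) / 2 * V k := by
      have : 0 ≤ (1 - l) / 2 * ((1 - l) * z k ^ 2) := by
        have : 0 ≤ 1 - l := by linarith
        positivity
      simp only [hV]
      linarith
    linarith
  set N := max K 1 with hN
  have hgeo : ∀ j, V (N + j) ≤ ρ ^ j * V N := by
    intro j
    induction j with
    | zero => simp
    | succ j ih =>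
      have a1 := hstep (N + j) (by omega)
      have a2 := mul_le_mul_of_nonneg_left ih hρ0.le
      rw [← add_assoc, pow_succ]
      linarith
  have hl' : 0 < 1 - l := by linarith
  set D := V N / ρ ^ N / (1 - l) with hD
  have hD0 : 0 ≤ D := by have := hV0 N; positivity
  refine ⟨Real.sqrt D + 1, by positivity, Real.sqrt ρ, by positivity, ?_, N, le_max_right _ _, ?_⟩
  · rw [Real.sqrt_lt' one_pos, hρ]; linarith
  · intro k hk
    obtain ⟨j, rfl⟩ := Nat.exists_eq_add_of_le hk
    have b1 : z (N + j) ^ 2 ≤ D * ρ ^ (N + j) := by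
      have : D * ρ ^ (N + j) = (ρ ^ j * V N) / (1 - l) := by
        rw [hD, pow_add]; field_simp
      rw [this, le_div_iff₀ hl']
      have := hgeo j
      have q : V (N + j) = (1 - l) * z (N + j) ^ 2 + l * (z (N + j) - z (N + j - 1)) ^ 2 := rfl
      have : 0 ≤ l * (z (N + j) - z (N + j - 1)) ^ 2 := by positivity
      linarith
    have b2 : |z (N + j)| ≤ Real.sqrt D * Real.sqrt ρ ^ (N + j) := by
      refine abs_le_of_sq_le_sq ?_ (by positivity)
      rw [mul_pow, Real.sq_sqrt hD0, ← pow_mul, mul_comm (N + j) 2, pow_mul, Real.sq_sqrt hρ0.le]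
      exact b1
    have : 0 ≤ Real.sqrt ρ ^ (N + j) := by positivity
    linarith

lemma norm2_le_sum {n : ℕ} (x : Fin n → ℝ) : norm2 x ≤ ∑ i, |x i| := by
  unfold norm2
  refine Real.sqrt_le_iff.2 ⟨Finset.sum_nonneg fun i _ => abs_nonneg _, ?_⟩
  calc ∑ i, x i ^ 2 = ∑ i, |x i| ^ 2 := by simp
    _ ≤ _ := Finset.sum_sq_le_sq_sum_of_nonneg fun i _ => abs_nonneg _

lemma G_posDef {n m : ℕ} (A : Matrix (Fin m) (Fin n) ℝ) (γ : ℝ) (hγ0 : 0 < γ)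
    (hγ1 : γ < 1 / lamMax (Aᵀ * A)) : (1 - γ • (Aᵀ * A)).PosDef := by
  have hL : 0 < lamMax (Aᵀ * A) := by
    by_contra h
    have : 1 / lamMax (Aᵀ * A) ≤ 0 := one_div_nonpos.2 (not_lt.1 h)
    linarith
  have hγL : γ * lamMax (Aᵀ * A) < 1 := (lt_div_iff₀ hL).1 hγ1
  have hG : (1 - γ • (Aᵀ * A)).IsHermitian := by
    ext i j
    simp [Matrix.mul_apply, Matrix.one_apply, mul_comm, eq_comm]
  rw [hG.posDef_iff_eigenvalues_pos]
  intro i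
  have h1 := hG.mulVec_eigenvectorBasis i
  set v : Fin n → ℝ := ⇑(hG.eigenvectorBasis i) with hv
  have hv0 : v ≠ 0 := by
    intro h
    apply hG.eigenvectorBasis.orthonormal.ne_zero i
    ext j
    exact congrFun h j
  set μ := hG.eigenvalues i with hμ
  have h2 : (Aᵀ * A) *ᵥ v = ((1 - μ) / γ) • v := by
    rw [Matrix.sub_mulVec, Matrix.one_mulVec, Matrix.smul_mulVec] at h1
    have : γ • ((Aᵀ * A) *ᵥ v) = (1 - μ) • v := by
      rw [sub_smul, one_smul, ← h1]; simp
    rw [div_eq_inv_mul, mul_smul, ← this, smul_smul, inv_mul_cancel₀ hγ0.ne', one_smul]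
  have h3 : (1 - μ) / γ ∈ spectrum ℝ (Aᵀ * A) := by
    rw [spectrum.mem_iff]
    intro hu
    apply hv0
    apply Matrix.mulVec_injective_iff_isUnit.2 hu
    simp [Matrix.sub_mulVec, h2, Algebra.algebraMap_eq_smul_one, Matrix.smul_mulVec]
  have h4 : (1 - μ) / γ ≤ lamMax (Aᵀ * A) :=
    le_csSup (Matrix.finite_real_spectrum (A := Aᵀ * A)).bddAbove h3
  rw [div_le_iff₀ hγ0] at h4
  linarith

open scoped MatrixOrder in
lemma exists_sqrt {n : ℕ} (G : Matrix (Fin n) (Fin n) ℝ) (hG : G.PosDef) :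
    ∃ R : Matrix (Fin n) (Fin n) ℝ, R.PosSemidef ∧ R * R = G ∧ IsUnit R := by
  have h : CFC.sqrt G * CFC.sqrt G = G := CFC.sqrt_mul_sqrt_self G hG.posSemidef.nonneg
  refine ⟨CFC.sqrt G, Matrix.nonneg_iff_posSemidef.1 (CFC.sqrt_nonneg G), h, ?_⟩
  have := hG.isUnit
  rw [← h] at this
  exact isUnit_of_mul_isUnit_left this

lemma key {n m : ℕ} (A : Matrix (Fin m) (Fin n) ℝ)
    (W R : Matrix (Fin n) (Fin n) ℝ) (hW1 : ((1 : Matrix (Fin n) (Fin n) ℝ) - W).PosSemidef)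
    (hker : ∀ x : Fin n → ℝ, A *ᵥ x = 0 → W *ᵥ x = x → x = 0)
    (γ : ℝ) (hγ0 : 0 < γ) (hR : R.PosSemidef) (hRR : R * R = 1 - γ • (Aᵀ * A))
    (l : ℝ) (hl : 1 ≤ l) (v : Fin n → ℝ) (hv : (R * W * R) *ᵥ v = l • v) : v = 0 := by
  have hRt : Rᵀ = R := by simpa using hR.isHermitian.eq
  have mv : ∀ x y : Fin n → ℝ, (R *ᵥ x) ⬝ᵥ y = x ⬝ᵥ (R *ᵥ y) := by
    intro x y
    rw [Matrix.dotProduct_mulVec, ← Matrix.mulVec_transpose, hRt]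
  have e1 : (R *ᵥ v) ⬝ᵥ (W *ᵥ (R *ᵥ v)) = l * (v ⬝ᵥ v) := by
    rw [mv, Matrix.mulVec_mulVec, Matrix.mulVec_mulVec, hv, dotProduct_smul,
      smul_eq_mul]
  have e2 : (R *ᵥ v) ⬝ᵥ (R *ᵥ v) = v ⬝ᵥ v - γ * ((A *ᵥ v) ⬝ᵥ (A *ᵥ v)) := by
    rw [mv, Matrix.mulVec_mulVec, hRR, Matrix.sub_mulVec, Matrix.one_mulVec, Matrix.smul_mulVec,
      dotProduct_sub, dotProduct_smul, smul_eq_mul, ← Matrix.mulVec_mulVec,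
      Matrix.dotProduct_mulVec v, Matrix.vecMul_transpose]
  have e3 := hW1.dotProduct_mulVec_nonneg (R *ᵥ v)
  have e4 : star (R *ᵥ v) ⬝ᵥ ((1 - W) *ᵥ (R *ᵥ v))
      = (R *ᵥ v) ⬝ᵥ (R *ᵥ v) - (R *ᵥ v) ⬝ᵥ (W *ᵥ (R *ᵥ v)) := by
    rw [Matrix.sub_mulVec, Matrix.one_mulVec, dotProduct_sub]; simp
  have e5 : 0 ≤ (A *ᵥ v) ⬝ᵥ (A *ᵥ v) := Finset.sum_nonneg fun i _ => mul_self_nonneg _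
  have e6 : 0 ≤ v ⬝ᵥ v := Finset.sum_nonneg fun i _ => mul_self_nonneg _
  have e7 : v ⬝ᵥ v ≤ l * (v ⬝ᵥ v) := by nlinarith
  have e5' : 0 ≤ γ * ((A *ᵥ v) ⬝ᵥ (A *ᵥ v)) := by positivity
  have hA0 : A *ᵥ v = 0 := by
    apply dotProduct_self_eq_zero.1
    have : γ * ((A *ᵥ v) ⬝ᵥ (A *ᵥ v)) = 0 := by linarith
    rcases mul_eq_zero.1 this with h | h
    · exact absurd h hγ0.ne'
    · exact h
  have hW0 : (1 - W) *ᵥ (R *ᵥ v) = 0 := by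
    rw [← hW1.dotProduct_mulVec_zero_iff]
    linarith
  have hGv : R *ᵥ (R *ᵥ v) = v := by
    rw [Matrix.mulVec_mulVec, hRR, Matrix.sub_mulVec, Matrix.one_mulVec, Matrix.smul_mulVec,
      ← Matrix.mulVec_mulVec, hA0]
    simp
  have hq : R *ᵥ v - v = 0 := by
    have q1 : R *ᵥ (R *ᵥ v - v) = -(R *ᵥ v - v) := by
      rw [Matrix.mulVec_sub, hGv]; simp
    have q2 := hR.dotProduct_mulVec_nonneg (R *ᵥ v - v)
    rw [q1, dotProduct_neg] at q2
    apply dotProduct_self_eq_zero.1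
    have q3 : 0 ≤ (R *ᵥ v - v) ⬝ᵥ (R *ᵥ v - v) := Finset.sum_nonneg fun i _ => mul_self_nonneg _
    have q4 : star (R *ᵥ v - v) = R *ᵥ v - v := by simp
    rw [q4] at q2
    linarith
  have hRv : R *ᵥ v = v := sub_eq_zero.1 hq
  rw [hRv, Matrix.sub_mulVec, Matrix.one_mulVec] at hW0
  exact hker v hA0 (sub_eq_zero.1 hW0).symm

theorem stmt9 (n m : ℕ) (A : Matrix (Fin m) (Fin n) ℝ) (b : Fin m → ℝ)
    (W : Matrix (Fin n) (Fin n) ℝ)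
    (hW : W.PosSemidef) (hW1 : ((1 : Matrix (Fin n) (Fin n) ℝ) - W).PosSemidef)
    (hA : A ≠ 0)
    (hker : ∀ x : Fin n → ℝ, A *ᵥ x = 0 → W *ᵥ x = x → x = 0)
    (γ : ℝ) (hγ0 : 0 < γ) (hγ1 : γ < 1 / lamMax (Aᵀ * A))
    (α : ℕ → ℝ) (hα : Tendsto α atTop (nhds 1)) :
    IsUnit ((1 : Matrix (Fin n) (Fin n) ℝ) - W * (1 - γ • (Aᵀ * A))) ∧
    ∀ x y : ℕ → Fin n → ℝ,
      y 1 = x 0 →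
      (∀ k, 1 ≤ k → x k = W *ᵥ (y k - γ • (Aᵀ *ᵥ (A *ᵥ y k - b)))) →
      (∀ k, 1 ≤ k → y (k + 1) = x k + α k • (x k - x (k - 1))) →
      ∃ C, 0 < C ∧ ∃ β, 0 ≤ β ∧ β < 1 ∧ ∃ K, 1 ≤ K ∧ ∀ k, K ≤ k →
        norm2 (x k -
          ((1 : Matrix (Fin n) (Fin n) ℝ) - W * (1 - γ • (Aᵀ * A)))⁻¹ *ᵥ
            (γ • (W *ᵥ (Aᵀ *ᵥ b)))) ≤ C * β ^ k := by
  obtain ⟨R, hR, hRR, hRu⟩ := exists_sqrt _ (G_posDef A γ hγ0 hγ1)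
  have hkey := key A W R hW1 hker γ hγ0 hR hRR
  rw [← hRR]
  have hRinj := Matrix.mulVec_injective_iff_isUnit.2 hRu
  have hU : IsUnit ((1 : Matrix (Fin n) (Fin n) ℝ) - W * (R * R)) := by
    rw [← Matrix.mulVec_injective_iff_isUnit]
    apply (injective_iff_map_eq_zero ((1 - W * (R * R)).mulVecLin)).2
    intro u hu
    rw [Matrix.mulVecLin_apply, Matrix.sub_mulVec, Matrix.one_mulVec, sub_eq_zero] at hu
    have : R *ᵥ u = 0 := by
      apply hkey 1 le_rfl
      rw [one_smul, Matrix.mulVec_mulVec]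
      conv_rhs => rw [hu]
      rw [Matrix.mulVec_mulVec]
      simp only [mul_assoc]
    exact hRinj (by simpa using this)
  refine ⟨hU, fun x y _ hx hy => ?_⟩
  set P := W * (R * R) with hP
  set c := γ • (W *ᵥ (Aᵀ *ᵥ b)) with hc
  set xs := (1 - P)⁻¹ *ᵥ c with hxs
  have hfix : xs = P *ᵥ xs + c := by
    have : (1 - P) *ᵥ xs = c := by
      rw [hxs, Matrix.mulVec_mulVec, Matrix.mul_nonsing_inv _ ((Matrix.isUnit_iff_isUnit_det _).1 hU),
        Matrix.one_mulVec]
    rw [Matrix.sub_mulVec, Matrix.one_mulVec] at this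
    rw [← this]; abel
  have hxP : ∀ k, 1 ≤ k → x k = P *ᵥ y k + c := by
    intro k hk
    rw [hx k hk, hP, hRR, hc]
    simp only [Matrix.mulVec_sub, Matrix.mulVec_smul, ← Matrix.mulVec_mulVec, Matrix.sub_mulVec,
      Matrix.one_mulVec, Matrix.smul_mulVec, smul_sub]
    abel
  have hrec : ∀ k, 1 ≤ k → x (k + 1) - xs
      = P *ᵥ ((x k - xs) + α k • ((x k - xs) - (x (k - 1) - xs))) := by
    intro k hk
    have : (x k - xs) + α k • ((x k - xs) - (x (k - 1) - xs)) = y (k + 1) - xs := by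
      rw [hy k hk, sub_sub_sub_cancel_right]; abel
    rw [this, hxP (k + 1) (by omega), Matrix.mulVec_sub]
    nth_rewrite 1 [hfix]
    abel
  have hRt : Rᴴ = R := hR.isHermitian.eq
  have hS : (R * W * R).PosSemidef := by
    have := hW.mul_mul_conjTranspose_same R
    rwa [hRt] at this
  set l := hS.isHermitian.eigenvalues with hl
  have hl0 : ∀ i, 0 ≤ l i := fun i => hS.eigenvalues_nonneg i
  have hl1 : ∀ i, l i < 1 := by
    intro i
    by_contra h
    have h0 := hkey (l i) (not_lt.1 h) _ (hS.isHermitian.mulVec_eigenvectorBasis i)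
    apply hS.isHermitian.eigenvectorBasis.orthonormal.ne_zero i
    ext j
    exact congrFun h0 j
  have hspec := hS.isHermitian.spectral_theorem
  rw [Unitary.conjStarAlgAut_apply] at hspec
  have hUU := Unitary.coe_star_mul_self hS.isHermitian.eigenvectorUnitary
  set U : Matrix (Fin n) (Fin n) ℝ := (hS.isHermitian.eigenvectorUnitary : Matrix (Fin n) (Fin n) ℝ) with hUdef
  have hUU' : U * star U = 1 := mul_eq_one_comm.1 hUU
  set f : ℕ → Fin n → ℝ := fun k => (star U * R) *ᵥ (x k - xs) with hf
  have hcomm : (star U * R) * P = diagonal l * (star U * R) := by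
    have : star U * (R * W * R) = diagonal l * star U := by
      rw [hspec, ← mul_assoc, ← mul_assoc, hUU, one_mul]; rfl
    rw [← mul_assoc (diagonal l), ← this, hP]; simp only [mul_assoc]
  have hfrec : ∀ i, LinD (fun k => f k i) := by
    intro i
    apply LinD.of_rec (l i) (hl0 i) (hl1 i) α hα
    intro k hk
    simp only [hf]
    rw [hrec k hk, Matrix.mulVec_mulVec, hcomm, ← Matrix.mulVec_mulVec, Matrix.mulVec_diagonal,
      Matrix.mulVec_add, Matrix.mulVec_smul,
      Matrix.mulVec_sub _ (x k - xs) (x (k - 1) - xs)]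
    rfl
  have hback : ∀ k, x k - xs = (R⁻¹ * U) *ᵥ f k := by
    intro k
    simp only [hf]
    rw [Matrix.mulVec_mulVec]
    have : R⁻¹ * U * (star U * R) = 1 := by
      rw [mul_assoc, ← mul_assoc U, hUU', one_mul,
        Matrix.nonsing_inv_mul _ ((Matrix.isUnit_iff_isUnit_det _).1 hRu)]
    rw [this, Matrix.one_mulVec]
  have hcoord : ∀ j, LinD (fun k => (x k - xs) j) := by
    intro j
    have : (fun k => (x k - xs) j) = fun k => ∑ i, (R⁻¹ * U) j i * f k i := by
      funext k
      rw [hback k]; rfl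
    rw [this]
    exact LinD.sum _ _ fun i => (hfrec i).smul _
  obtain ⟨C, hC, β, hβ, hβ1, K, hK, h⟩ := LinD.sum Finset.univ _ fun j => (hcoord j).abs
  refine ⟨C, hC, β, hβ, hβ1, K, hK, fun k hk => ?_⟩
  exact (norm2_le_sum _).trans ((le_abs_self _).trans (h k hk))
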